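/- Let G = (V, E) be a graph with edges e₁, …, e_m, let G_E be the edge-gadget graph for G, and let M be any fractional matching of G_E. For every edge e_j = {v_i, v_{i'}} ∈ E: if the agent f_j is fully matched under M (i.e., M({f_j, e_j^i}) + M({f_j, e_j^{i'}}) = 1), then U_M(e_j^i) < sat(e_j^i, u_i) = 5 or U_M(e_j^{i'}) < sat(e_j^{i'}, u_{i'}) = 7. -/

import Mathlib

/-!
Write `a, b` for the weights of `f_j` towards `e_j^i`, `e_j^{i'}` and `x, y` for those of `e_j`.
Among its neighbours, `e_j^i` likes only `e_j` (by 2) more than `u_i`, and likes `f_j` less by 2;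
as its total weight is at most `1`, `U_M(e_j^i) ≤ 5 + 2x - 2a`. Likewise
`U_M(e_j^{i'}) ≤ 7 + 2y - 3b`. If neither utility were below its threshold, then `a ≤ x` and
`3b ≤ 2y`. Since `a + x ≤ 1`, this gives `a ≤ 1/2`, hence `b = 1 - a ≥ 1/2`, and so
`x + y ≥ a + 3b/2 = 1 + b/2 > 1`, contradicting the weight bound at `e_j`.
-/

open Finset
open scoped Classical

variable {V : Type*}

/-- Two agents find each other acceptable iff at least one of them assigns
positive satisfaction to the other. -/
def Adj (sat : V → V → ℚ) (u v : V) : Prop :=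
  0 < sat u v ∨ 0 < sat v u

instance (sat : V → V → ℚ) (u v : V) : Decidable (Adj sat u v) :=
  inferInstanceAs (Decidable (0 < sat u v ∨ 0 < sat v u))

/-- `sat` describes a valid instance: satisfactions are nonnegative, an agent has
zero satisfaction towards itself, and the acceptability graph has no isolated vertices. -/
structure IsInstance [Fintype V] (sat : V → V → ℚ) : Prop where
  nonneg : ∀ u v, 0 ≤ sat u v
  sat_self : ∀ u, sat u u = 0
  noIsolated : ∀ v, ∃ u, Adj sat v u

/-- `M` is a fractional matching of the acceptability graph of `sat`. -/
structure IsMatching [Fintype V] (sat : V → V → ℚ) (M : V → V → ℝ) : Prop where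
  symm : ∀ u v, M u v = M v u
  nonneg : ∀ u v, 0 ≤ M u v
  support : ∀ u v, ¬ Adj sat u v → M u v = 0
  degree_le_one : ∀ v, ∑ u, M v u ≤ 1

/-- `M(x, ≽ y)`: total matching value of `x` with neighbours liked at least as much as `y`. -/
noncomputable def wge [Fintype V] (sat : V → V → ℚ) (M : V → V → ℝ) (x y : V) : ℝ :=
  ∑ z ∈ Finset.univ.filter (fun z => Adj sat x z ∧ sat x y ≤ sat x z), M x z

/-- `M(x, ≻ y)`: total matching value of `x` with neighbours strictly preferred to `y`. -/
noncomputable def wgt [Fintype V] (sat : V → V → ℚ) (M : V → V → ℝ) (x y : V) : ℝ :=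
  ∑ z ∈ Finset.univ.filter (fun z => Adj sat x z ∧ sat x y < sat x z), M x z

/-- Utility of agent `v` under matching `M`. -/
noncomputable def util [Fintype V] (sat : V → V → ℚ) (M : V → V → ℝ) (v : V) : ℝ :=
  ∑ u, (sat v u : ℝ) * M v u

/-- Social welfare of a matching. -/
noncomputable def welfare [Fintype V] (sat : V → V → ℚ) (M : V → V → ℝ) : ℝ :=
  ∑ v, util sat M v

/-- Ordinal stability: no edge is ordinally blocking. -/
def OrdStable [Fintype V] (sat : V → V → ℚ) (M : V → V → ℝ) : Prop :=
  ∀ u v, Adj sat u v → ¬ (wge sat M u v < 1 ∧ wge sat M v u < 1)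

/-- Cardinal stability: no edge is cardinally blocking. -/
def CardStable [Fintype V] (sat : V → V → ℚ) (M : V → V → ℝ) : Prop :=
  ∀ u v, Adj sat u v → ¬ (util sat M u < (sat u v : ℝ) ∧ util sat M v < (sat v u : ℝ))

/-- Linear stability: no edge is linearly blocking. -/
def LinStable [Fintype V] (sat : V → V → ℚ) (M : V → V → ℝ) : Prop :=
  ∀ u v, Adj sat u v → ¬ (wge sat M u v + wge sat M v u - M u v < 1)

/-- Strict preferences: no ties among distinct neighbours. -/
def StrictPrefs (sat : V → V → ℚ) : Prop :=
  ∀ v x y, Adj sat v x → Adj sat v y → x ≠ y → sat v x ≠ sat v y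

/-- The acceptability graph is bipartite with parts `U` and its complement. -/
def BipartiteWith (sat : V → V → ℚ) (U : Set V) : Prop :=
  ∀ u v, Adj sat u v → (u ∈ U ↔ v ∉ U)

/-- Integral matching. -/
def IntegralMatching (M : V → V → ℝ) : Prop := ∀ u v, M u v = 0 ∨ M u v = 1

/-- Number of fully matched agents. -/
noncomputable def nfully [Fintype V] (M : V → V → ℝ) : ℕ :=
  (Finset.univ.filter (fun v => ∑ u, M v u = (1 : ℝ))).card

/-- The agents of the edge-gadget graph `G_E`: for each edge `e_j` of `G` (with lower
endpoint `lo j` and higher endpoint `hi j`) there are six agents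
`inl (j, 0) = e_j`, `inl (j, 1) = f_j`, `inl (j, 2) = g_j`, `inl (j, 3) = h_j`,
`inl (j, 4) = e_j^i` and `inl (j, 5) = e_j^{i'}`, and for each vertex `v_i` of `G`
there is an agent `inr i = u_i`. -/
abbrev GV (n m : ℕ) := (Fin m × Fin 6) ⊕ Fin n

/-- The satisfaction function of the edge-gadget graph `G_E`, where `s i j` is the
(arbitrary, nonnegative, bounded by `5m`) value `sat(u_i, e_j^i)`. -/
def gadgetSat (n m : ℕ) (lo hi : Fin m → Fin n) (s : Fin n → Fin m → ℚ) :
    GV n m → GV n m → ℚ := fun a b =>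
  match a, b with
  | Sum.inl (j, c), Sum.inl (j', c') =>
    if j = j' then
      if c = 0 ∧ c' = 3 then 2 * (m : ℚ) ^ 2 + 8        -- sat(e_j, h_j)
      else if c = 3 ∧ c' = 0 then 1                     -- sat(h_j, e_j)
      else if c = 0 ∧ c' = 4 then 2 * (m : ℚ) ^ 2 + 2   -- sat(e_j, e_j^i)
      else if c = 4 ∧ c' = 0 then 7                     -- sat(e_j^i, e_j)
      else if c = 0 ∧ c' = 5 then 2 * (m : ℚ) ^ 2       -- sat(e_j, e_j^{i'})
      else if c = 5 ∧ c' = 0 then 9                     -- sat(e_j^{i'}, e_j)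
      else if c = 2 ∧ c' = 4 then 2 * (m : ℚ) ^ 2 + 7   -- sat(g_j, e_j^i)
      else if c = 4 ∧ c' = 2 then 2                     -- sat(e_j^i, g_j)
      else if c = 2 ∧ c' = 3 then 2 * (m : ℚ) ^ 2 + 5   -- sat(g_j, h_j)
      else if c = 3 ∧ c' = 2 then 4                     -- sat(h_j, g_j)
      else if c = 2 ∧ c' = 5 then 2 * (m : ℚ) ^ 2 + 4   -- sat(g_j, e_j^{i'})
      else if c = 5 ∧ c' = 2 then 5                     -- sat(e_j^{i'}, g_j)
      else if c = 1 ∧ c' = 4 then 2 * (m : ℚ) ^ 2 + 6   -- sat(f_j, e_j^i)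
      else if c = 4 ∧ c' = 1 then 3                     -- sat(e_j^i, f_j)
      else if c = 1 ∧ c' = 5 then 2 * (m : ℚ) ^ 2 + 5   -- sat(f_j, e_j^{i'})
      else if c = 5 ∧ c' = 1 then 4                     -- sat(e_j^{i'}, f_j)
      else 0
    else 0
  | Sum.inl (j, c), Sum.inr i =>
    if c = 4 ∧ i = lo j then 5                              -- sat(e_j^i, u_i)
    else if c = 5 ∧ i = hi j then 7                         -- sat(e_j^{i'}, u_{i'})
    else 0
  | Sum.inr i, Sum.inl (j, c) =>
    if c = 4 ∧ i = lo j then s i j                          -- sat(u_i, e_j^i)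
    else if c = 5 ∧ i = hi j then s i j                     -- sat(u_{i'}, e_j^{i'})
    else 0
  | Sum.inr _, Sum.inr _ => 0

/-- If `v` values every agent at most `c`, up to corrections `p` for `a` and `q` for `b`, then its
utility is at most `c` up to the same corrections weighted by the matching: the total weight of
`v` is at most `1`. -/
lemma util_le_of_sat_le {V : Type*} [Fintype V] {sat : V → V → ℚ} {M : V → V → ℝ}
    (hM : IsMatching sat M) (v a b : V) (c p q : ℝ) (hc : 0 ≤ c)
    (h : ∀ u, (sat v u : ℝ) ≤ c + (if u = a then p else 0) + (if u = b then q else 0)) :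
    util sat M v ≤ c + p * M v a + q * M v b := by
  calc util sat M v
      ≤ ∑ u, (c + (if u = a then p else 0) + (if u = b then q else 0)) * M v u :=
        Finset.sum_le_sum fun u _ => mul_le_mul_of_nonneg_right (h u) (hM.nonneg v u)
    _ = c * ∑ u, M v u + p * M v a + q * M v b := by
        simp [add_mul, Finset.sum_add_distrib, Finset.mul_sum, ite_mul]
    _ ≤ c + p * M v a + q * M v b := by
        have := mul_le_mul_of_nonneg_left (hM.degree_le_one v) hc
        linarith

lemma add_le_one_of_isMatching {V : Type*} [Fintype V] {sat : V → V → ℚ} {M : V → V → ℝ}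
    (hM : IsMatching sat M) (v : V) {a b : V} (hab : a ≠ b) : M v a + M v b ≤ 1 := by
  rw [← Finset.sum_pair (f := M v) hab]
  exact (Finset.sum_le_sum_of_subset_of_nonneg (Finset.subset_univ _)
    fun u _ _ => hM.nonneg v u).trans (hM.degree_le_one v)

/-- `f_j` is adjacent to `e_j^i` and `e_j^{i'}` only. -/
lemma not_adj_f (n m : ℕ) (lo hi : Fin m → Fin n) (s : Fin n → Fin m → ℚ) (j : Fin m)
    (u : GV n m) (h4 : u ≠ Sum.inl (j, 4)) (h5 : u ≠ Sum.inl (j, 5)) :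
    ¬ Adj (gadgetSat n m lo hi s) (Sum.inl (j, 1)) u := by
  rcases u with ⟨k, c⟩ | i
  · by_cases hk : j = k
    · subst hk
      fin_cases c <;> simp_all [Adj, gadgetSat]
    · simp [Adj, gadgetSat, hk, Ne.symm hk]
  · simp [Adj, gadgetSat]

/-- in any fractional matching of the edge-gadget graph, if the agent
`f_j` is fully matched, then `U_M(e_j^i) < sat(e_j^i, u_i) = 5` or
`U_M(e_j^{i'}) < sat(e_j^{i'}, u_{i'}) = 7`. -/
theorem edgeGadget_fj_fullyMatched
    (n m : ℕ) (lo hi : Fin m → Fin n)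
    (hlh : ∀ j, lo j < hi j)
    (hinj : Function.Injective (fun j => (lo j, hi j)))
    (s : Fin n → Fin m → ℚ)
    (hs0 : ∀ i j, 0 ≤ s i j) (hs5 : ∀ i j, s i j ≤ 5 * m)
    (M : GV n m → GV n m → ℝ)
    (hM : IsMatching (gadgetSat n m lo hi s) M)
    (j : Fin m)
    (hfull : ∑ u, M (Sum.inl (j, (1 : Fin 6))) u = 1) :
    util (gadgetSat n m lo hi s) M (Sum.inl (j, (4 : Fin 6))) < 5 ∨
    util (gadgetSat n m lo hi s) M (Sum.inl (j, (5 : Fin 6))) < 7 := by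
  have hU4 := util_le_of_sat_le hM (Sum.inl (j, 4)) (Sum.inl (j, 0)) (Sum.inl (j, 1)) 5 2 (-2)
    (by norm_num) (by
      rintro (⟨k, c⟩ | i)
      · by_cases hk : j = k
        · subst hk
          fin_cases c <;> simp [gadgetSat] <;> norm_num
        · simp [gadgetSat, hk, Ne.symm hk]
      · by_cases hi' : i = lo j <;> simp [gadgetSat, hi'])
  have hU5 := util_le_of_sat_le hM (Sum.inl (j, 5)) (Sum.inl (j, 0)) (Sum.inl (j, 1)) 7 2 (-3)
    (by norm_num) (by
      rintro (⟨k, c⟩ | i)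
      · by_cases hk : j = k
        · subst hk
          fin_cases c <;> simp [gadgetSat] <;> norm_num
        · simp [gadgetSat, hk, Ne.symm hk]
      · by_cases hi' : i = hi j <;> simp [gadgetSat, hi'])
  have hf : M (Sum.inl (j, 1)) (Sum.inl (j, 4)) + M (Sum.inl (j, 1)) (Sum.inl (j, 5)) = 1 := by
    rw [← hfull]
    symm
    apply Fintype.sum_eq_add _ _ (by simp)
    rintro u ⟨h4, h5⟩
    exact hM.support _ _ (not_adj_f n m lo hi s j u h4 h5)
  have he := add_le_one_of_isMatching hM (Sum.inl (j, 0))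
    (a := Sum.inl (j, 4)) (b := Sum.inl (j, 5)) (by simp)
  have h4 := add_le_one_of_isMatching hM (Sum.inl (j, 4))
    (a := Sum.inl (j, 0)) (b := Sum.inl (j, 1)) (by simp)
  rw [hM.symm (Sum.inl (j, 4)) (Sum.inl (j, 0)), hM.symm (Sum.inl (j, 4)) (Sum.inl (j, 1))]
    at hU4 h4
  rw [hM.symm (Sum.inl (j, 5)) (Sum.inl (j, 0)), hM.symm (Sum.inl (j, 5)) (Sum.inl (j, 1))] at hU5
  by_contra! hcon
  linarith [hcon.1, hcon.2]
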